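/- Let B be a C*-algebra and b ∈ B₊, ε > 0. Suppose b and (b − ε)₊ are properly infinite positive elements generating the same closed two-sided ideal I of B. Then I contains a projection p that is properly infinite and full in I (i.e., generates I as an ideal). -/

import Mathlib

open Filter Topology

/-- A subset of a C*-algebra is a closed two-sided ideal. -/
def IsClosedTwoSidedIdeal {B : Type*} [NonUnitalCStarAlgebra B] (S : Set B) : Prop :=
  IsClosed S ∧ (0 : B) ∈ S ∧ (∀ x ∈ S, ∀ y ∈ S, x + y ∈ S) ∧ (∀ x ∈ S, -x ∈ S) ∧
    (∀ a : B, ∀ x ∈ S, a * x ∈ S ∧ x * a ∈ S)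

/-- The smallest closed two-sided ideal of `B` containing `a`. -/
def closedIdealGen {B : Type*} [NonUnitalCStarAlgebra B] (a : B) : Set B :=
  ⋂₀ {S : Set B | IsClosedTwoSidedIdeal S ∧ a ∈ S}

/-- Cuntz subequivalence in `M₂(B)`: `x ≾ y` iff there exist `w_n` with `w_n* y w_n → x`. -/
def CuntzLE₂ {B : Type*} [NonUnitalCStarAlgebra B]
    (x y : Matrix (Fin 2) (Fin 2) B) : Prop :=
  ∃ w : ℕ → Matrix (Fin 2) (Fin 2) B,
    Tendsto (fun n => star (w n) * y * w n) atTop (𝓝 x)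

/-- A non-zero positive element `a` is properly infinite if `a ⊕ a ≾ a ⊕ 0` in `M₂(B)`. -/
def ProperlyInfinite {B : Type*} [NonUnitalCStarAlgebra B] [PartialOrder B]
    [StarOrderedRing B] (a : B) : Prop :=
  a ≠ 0 ∧ 0 ≤ a ∧ CuntzLE₂ (Matrix.diagonal ![a, a]) (Matrix.diagonal ![a, 0])


/-- If `g` is the square root of `Y Y*` then `‖T g‖ = ‖T Y‖` and left units are inherited. -/
lemma aux_sqrt {B : Type*} [NonUnitalCStarAlgebra B] [PartialOrder B] [StarOrderedRing B]
    (Y : B) : ∃ g : B, star g = g ∧ g * g = Y * star Y ∧ (∀ T, ‖T * g‖ = ‖T * Y‖) ∧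
      ∀ u, u * Y = Y → u * g = g := by
  have h0 : 0 ≤ Y * star Y := mul_star_self_nonneg Y
  have hs : star (CFC.sqrt (Y * star Y)) = CFC.sqrt (Y * star Y) :=
    (CFC.sqrt_nonneg (Y * star Y)).isSelfAdjoint.star_eq
  have hm : CFC.sqrt (Y * star Y) * CFC.sqrt (Y * star Y) = Y * star Y :=
    CFC.sqrt_mul_sqrt_self _ h0
  generalize CFC.sqrt (Y * star Y) = g at hs hm
  refine ⟨g, hs, hm, ?_, ?_⟩
  · intro T
    have h : (T * g) * star (T * g) = (T * Y) * star (T * Y) := by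
      rw [star_mul, star_mul, hs, mul_assoc, ← mul_assoc g, hm]; simp only [mul_assoc]
    have h1 := CStarRing.norm_self_mul_star (x := T * g)
    rw [h, CStarRing.norm_self_mul_star] at h1
    exact (mul_self_inj (norm_nonneg _) (norm_nonneg _)).1 h1.symm
  · intro u hu
    have hu2 : star Y * star u = star Y := by rw [← star_mul, hu]
    have h : (u * g - g) * star (u * g - g) = 0 := by
      have : (u * g - g) * star (u * g - g) =
          u * (g * g) * star u - u * (g * g) - (g * g) * star u + g * g := by
        rw [star_sub, star_mul, hs]; noncomm_ring
      rw [this, hm]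
      have e1 : u * (Y * star Y) = Y * star Y := by rw [← mul_assoc, hu]
      have e2 : (Y * star Y) * star u = Y * star Y := by rw [mul_assoc, hu2]
      rw [e1, e2]; abel
    exact sub_eq_zero.1 (CStarRing.mul_star_self_eq_zero_iff _ |>.1 h)

lemma aux_fix {B : Type*} [NonUnitalCStarAlgebra B] (L X : B) (hX : ‖X‖ ≤ 1 / 2) :
    ∃ Y : B, Y = L + Y * X := by
  have hc : ContractingWith (1/2 : NNReal) (fun Y : B => L + Y * X) := by
    refine ⟨by norm_num, LipschitzWith.of_dist_le_mul fun x y => ?_⟩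
    rw [dist_eq_norm, dist_eq_norm]
    have : (L + x * X) - (L + y * X) = (x - y) * X := by noncomm_ring
    rw [this]
    calc _ ≤ ‖x - y‖ * ‖X‖ := norm_mul_le _ _
      _ ≤ ‖x - y‖ * (1/2) := by gcongr
      _ = _ := by simp; ring
  have : Nonempty B := ⟨0⟩
  exact ⟨_, (hc.fixedPoint_isFixedPt (f := fun Y : B => L + Y * X)).symm⟩

/-- An exact form of the Rørdam lemma. -/
lemma aux_R {B : Type*} [NonUnitalCStarAlgebra B] [PartialOrder B] [StarOrderedRing B]
    (L S e0 q : B) (h : ‖star L * S - e0‖ ≤ 1 / 2) (hq : star q = q) (h0 : e0 * q = q) :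
    ∃ g : B, star g = g ∧ star (g * S * q) * (g * S * q) = q * q ∧
      (∀ T, ‖T * g‖ ≤ 2 * ‖T * L‖) ∧ ∀ u, u * L = L → u * g = g := by
  set X := e0 - star L * S with hXd
  have hX : ‖X‖ ≤ 1 / 2 := by rw [hXd, norm_sub_rev]; exact h
  obtain ⟨Y, hY⟩ := aux_fix L (star X) (by rwa [norm_star])
  obtain ⟨g, g1, g2, g3, g4⟩ := aux_sqrt Y
  have zero : ∀ d : B, d = X * d → d = 0 := by
    intro d hd
    have h1 : ‖d‖ ≤ 1/2 * ‖d‖ := by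
      calc ‖d‖ = ‖X * d‖ := by rw [← hd]
        _ ≤ ‖X‖ * ‖d‖ := norm_mul_le _ _
        _ ≤ _ := by gcongr
    exact norm_le_zero_iff.1 (by linarith)
  have hYs : star Y = star L + X * star Y := by
    conv_lhs => rw [hY]
    simp
  have key : star Y * S * q = q := by
    apply sub_eq_zero.1
    apply zero
    have a1 : star Y * S * q = star L * S * q + X * (star Y * S * q) := by
      conv_lhs => rw [hYs]
      noncomm_ring
    have a2 : q = star L * S * q + X * q := by
      rw [hXd, sub_mul, h0]; abel
    calc star Y * S * q - q = (star L * S * q + X * (star Y * S * q)) -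
          (star L * S * q + X * q) := by rw [← a1, ← a2]
      _ = _ := by noncomm_ring
  refine ⟨g, g1, ?_, ?_, ?_⟩
  · have : star (g * S * q) * (g * S * q) = star (star Y * S * q) * (star Y * S * q) := by
      simp only [star_mul, g1, star_star]
      calc _ = star q * (star S * ((g * g) * (S * q))) := by simp only [mul_assoc]
        _ = _ := by rw [g2]; simp only [mul_assoc]
    rw [this, key, hq]
  · intro T
    rw [g3]
    have h1 : ‖T * Y‖ ≤ ‖T * L‖ + ‖T * Y‖ * (1/2) := by
      calc ‖T * Y‖ = ‖T * L + (T * Y) * star X‖ := by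
            conv_lhs => rw [hY]
            noncomm_ring
        _ ≤ ‖T * L‖ + ‖(T * Y) * star X‖ := norm_add_le _ _
        _ ≤ ‖T * L‖ + ‖T * Y‖ * ‖star X‖ := by gcongr; exact norm_mul_le _ _
        _ ≤ _ := by rw [norm_star]; gcongr
    linarith
  · intro u hu
    apply g4
    have : star (u * Y - Y) = 0 := by
      apply zero
      have : u * Y - Y = (u * Y - Y) * star X := by
        calc u * Y - Y = (u * (L + Y * star X)) - (L + Y * star X) := by rw [← hY]
          _ = _ := by rw [mul_add, hu]; noncomm_ring
      conv_lhs => rw [this]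
      simp
    exact sub_eq_zero.1 (star_eq_zero.1 this)

/-- Unpacking proper infiniteness. -/
lemma aux_pi {B : Type*} [NonUnitalCStarAlgebra B] [PartialOrder B] [StarOrderedRing B]
    (a : B) (h0 : 0 ≤ a) (h : CuntzLE₂ (Matrix.diagonal ![a, a]) (Matrix.diagonal ![a, 0]))
    (η : ℝ) (hη : 0 < η) : ∃ x y : B, ‖star x * a * x - a‖ < η ∧ ‖star y * a * y - a‖ < η ∧
      ‖star x * a * y‖ < η ∧ ‖star y * a * x‖ < η := by
  obtain ⟨w, hw⟩ := h
  have key : ∀ i j, ∀ᶠ n in atTop, ‖star (w n 0 i) * a * w n 0 j -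
      (Matrix.diagonal ![a, a] : Matrix (Fin 2) (Fin 2) B) i j‖ < η := by
    intro i j
    have h1 := (tendsto_pi_nhds.1 (tendsto_pi_nhds.1 hw i) j)
    have h2 := (Metric.tendsto_nhds.1 h1) η hη
    filter_upwards [h2] with n hn
    rw [dist_eq_norm] at hn
    have h3 : (star (w n) * (Matrix.diagonal ![a, 0] : Matrix (Fin 2) (Fin 2) B) * w n) i j
        = star (w n 0 i) * a * w n 0 j := by
      simp [Matrix.mul_apply, Matrix.star_apply, Fin.sum_univ_two, Matrix.diagonal]
    rwa [h3] at hn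
  obtain ⟨n, hn1, hn2, hn3, hn4⟩ :=
    ((key 0 0).and ((key 1 1).and ((key 0 1).and (key 1 0)))).exists
  refine ⟨w n 0 0, w n 0 1, ?_, ?_, ?_, ?_⟩
  · simpa using hn1
  · simpa using hn2
  · simpa using hn3
  · simpa using hn4

/-- Packing proper infiniteness. -/
lemma aux_pi' {B : Type*} [NonUnitalCStarAlgebra B] [PartialOrder B] [StarOrderedRing B]
    (a : B) (ha : star a = a) (x y : ℕ → B)
    (h1 : Tendsto (fun n => star (x n) * a * x n) atTop (𝓝 a))
    (h2 : Tendsto (fun n => star (y n) * a * y n) atTop (𝓝 a))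
    (h3 : Tendsto (fun n => star (x n) * a * y n) atTop (𝓝 0)) :
    CuntzLE₂ (Matrix.diagonal ![a, a]) (Matrix.diagonal ![a, 0]) := by
  have h4 : Tendsto (fun n => star (y n) * a * x n) atTop (𝓝 0) := by
    have := (continuous_star.tendsto (0 : B)).comp h3
    rw [star_zero] at this
    refine this.congr fun n => ?_
    simp [ha, mul_assoc]
  refine ⟨fun n => !![x n, y n; 0, 0], ?_⟩
  refine tendsto_pi_nhds.2 fun i => tendsto_pi_nhds.2 fun j => ?_
  fin_cases i <;> fin_cases j <;>
    simpa [Matrix.mul_apply, Matrix.star_apply, Fin.sum_univ_two, Matrix.diagonal]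

lemma gen_ideal {B : Type*} [NonUnitalCStarAlgebra B] (a : B) :
    IsClosedTwoSidedIdeal (closedIdealGen a) := by
  refine ⟨isClosed_sInter fun S hS => hS.1.1, fun S hS => hS.1.2.1, ?_, ?_, ?_⟩
  · exact fun x hx y hy S hS => hS.1.2.2.1 x (hx S hS) y (hy S hS)
  · exact fun x hx S hS => hS.1.2.2.2.1 x (hx S hS)
  · exact fun a x hx => ⟨fun S hS => (hS.1.2.2.2.2 a x (hx S hS)).1,
      fun S hS => (hS.1.2.2.2.2 a x (hx S hS)).2⟩

lemma gen_self {B : Type*} [NonUnitalCStarAlgebra B] (a : B) : a ∈ closedIdealGen a :=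
  fun _ hS => hS.2

lemma gen_le {B : Type*} [NonUnitalCStarAlgebra B] {a : B} {S : Set B}
    (h : IsClosedTwoSidedIdeal S) (ha : a ∈ S) : closedIdealGen a ⊆ S :=
  Set.sInter_subset_of_mem ⟨h, ha⟩

/-- The elements approximable by `L* c S` form a closed ideal if `c` is properly infinite. -/
lemma aux_ideal {B : Type*} [NonUnitalCStarAlgebra B] (c : B)
    (hpi : ∀ η : ℝ, 0 < η → ∃ x y : B, ‖star x * c * x - c‖ < η ∧ ‖star y * c * y - c‖ < η ∧
      ‖star x * c * y‖ < η ∧ ‖star y * c * x‖ < η) :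
    closedIdealGen c ⊆ {m | ∀ η : ℝ, 0 < η → ∃ L S : B, ‖star L * c * S - m‖ < η} := by
  apply gen_le
  · refine ⟨?_, ?_, ?_, ?_, ?_⟩
    · apply isClosed_of_closure_subset
      intro m hm η hη
      obtain ⟨m', hm', hd⟩ := Metric.mem_closure_iff.1 hm (η / 2) (by positivity)
      obtain ⟨L, S, h⟩ := hm' (η / 2) (by positivity)
      refine ⟨L, S, ?_⟩
      rw [dist_eq_norm, norm_sub_rev] at hd
      calc ‖star L * c * S - m‖ ≤ ‖star L * c * S - m'‖ + ‖m' - m‖ := norm_sub_le_norm_sub_add_norm_sub _ _ _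
        _ < η := by linarith
    · intro η hη
      exact ⟨0, 0, by simpa using hη⟩
    · intro m1 h1 m2 h2 η hη
      obtain ⟨L1, S1, h1⟩ := h1 (η / 4) (by positivity)
      obtain ⟨L2, S2, h2⟩ := h2 (η / 4) (by positivity)
      set K := (‖L1‖ + ‖L2‖) * (‖S1‖ + ‖S2‖) + 1 with hK
      have hKp : 0 < K := by positivity
      obtain ⟨x, y, e1, e2, e3, e4⟩ := hpi (η / (2 * K)) (by positivity)
      refine ⟨x * L1 + y * L2, x * S1 + y * S2, ?_⟩
      have id : star (x * L1 + y * L2) * c * (x * S1 + y * S2) - (m1 + m2) =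
          (star L1 * c * S1 - m1) + (star L2 * c * S2 - m2) +
          (star L1 * (star x * c * x - c) * S1 + star L2 * (star y * c * y - c) * S2 +
            star L1 * (star x * c * y) * S2 + star L2 * (star y * c * x) * S1) := by
        simp only [star_add, star_mul]
        noncomm_ring
      have bd : ∀ u v w : B, ∀ t : ℝ, ‖v‖ < t → ‖star u * v * w‖ ≤ ‖u‖ * ‖w‖ * t := by
        intro u v w t ht
        calc ‖star u * v * w‖ ≤ ‖star u * v‖ * ‖w‖ := norm_mul_le _ _
          _ ≤ ‖star u‖ * ‖v‖ * ‖w‖ := by gcongr; exact norm_mul_le _ _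
          _ = ‖u‖ * ‖w‖ * ‖v‖ := by rw [norm_star]; ring
          _ ≤ _ := by gcongr
      rw [id]
      have r1 := bd L1 _ S1 _ e1
      have r2 := bd L2 _ S2 _ e2
      have r3 := bd L1 _ S2 _ e3
      have r4 := bd L2 _ S1 _ e4
      have hfin : (K - 1) * (η / (2 * K)) ≤ η / 2 := by
        have : K * (η / (2 * K)) = η / 2 := by field_simp
        have : 0 < η / (2 * K) := by positivity
        nlinarith
      have hK' : K - 1 = ‖L1‖ * ‖S1‖ + ‖L2‖ * ‖S2‖ + ‖L1‖ * ‖S2‖ + ‖L2‖ * ‖S1‖ := by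
        rw [hK]; ring
      rw [hK'] at hfin
      refine lt_of_le_of_lt (norm_add_le _ _) ?_
      have n1 := norm_add_le (star L1 * c * S1 - m1) (star L2 * c * S2 - m2)
      have n2 := norm_add₄_le (a := star L1 * (star x * c * x - c) * S1)
        (b := star L2 * (star y * c * y - c) * S2)
        (c := star L1 * (star x * c * y) * S2) (d := star L2 * (star y * c * x) * S1)
      linarith
    · intro m hm η hη
      obtain ⟨L, S, h⟩ := hm η hη
      refine ⟨L, -S, ?_⟩
      have : star L * c * (-S) - -m = -(star L * c * S - m) := by noncomm_ring
      rw [this, norm_neg]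
      exact h
    · intro a m hm
      constructor
      · intro η hη
        obtain ⟨L, S, h⟩ := hm (η / (‖a‖ + 1)) (by positivity)
        refine ⟨L * star a, S, ?_⟩
        have : star (L * star a) * c * S - a * m = a * (star L * c * S - m) := by
          simp only [star_mul, star_star]; noncomm_ring
        rw [this]
        rw [lt_div_iff₀ (by positivity)] at h
        calc _ ≤ ‖a‖ * ‖star L * c * S - m‖ := norm_mul_le _ _
          _ ≤ ‖star L * c * S - m‖ * (‖a‖ + 1) := by nlinarith [norm_nonneg (star L * c * S - m)]
          _ < η := h
      · intro η hη
        obtain ⟨L, S, h⟩ := hm (η / (‖a‖ + 1)) (by positivity)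
        refine ⟨L, S * a, ?_⟩
        have : star L * c * (S * a) - m * a = (star L * c * S - m) * a := by noncomm_ring
        rw [this]
        rw [lt_div_iff₀ (by positivity)] at h
        calc _ ≤ ‖star L * c * S - m‖ * ‖a‖ := norm_mul_le _ _
          _ ≤ ‖star L * c * S - m‖ * (‖a‖ + 1) := by nlinarith [norm_nonneg (star L * c * S - m)]
          _ < η := h
  · intro η hη
    obtain ⟨x, y, h, -⟩ := hpi η hη
    exact ⟨x, x, h⟩

/-- Almost orthogonal exact copies. -/
lemma aux_pair {B : Type*} [NonUnitalCStarAlgebra B] [PartialOrder B] [StarOrderedRing B]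
    (c e e0 q : B) (hc : 0 ≤ c)
    (hpi : ∀ η : ℝ, 0 < η → ∃ x y : B, ‖star x * c * x - c‖ < η ∧ ‖star y * c * y - c‖ < η ∧
      ‖star x * c * y‖ < η ∧ ‖star y * c * x‖ < η)
    (he : e * c = c) (he0 : e0 ∈ closedIdealGen c) (hq : star q = q) (h0q : e0 * q = q)
    (η : ℝ) (hη : 0 < η) :
    ∃ S T : B, e * S = S ∧ e * T = T ∧ star S * S = q * q ∧ star T * T = q * q ∧
      ‖star S * T‖ ≤ η := by
  obtain ⟨L, S, hLS⟩ := aux_ideal c hpi he0 (1 / 4) (by norm_num)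
  -- square root of c
  have hd : ∃ d : B, star d = d ∧ d * d = c ∧ e * d = d := by
    obtain ⟨d, d1, d2, -, d4⟩ := aux_sqrt (CFC.sqrt c)
    have hs : star (CFC.sqrt c) = CFC.sqrt c := (CFC.sqrt_nonneg c).isSelfAdjoint.star_eq
    have hm : CFC.sqrt c * CFC.sqrt c = c := CFC.sqrt_mul_sqrt_self _ hc
    refine ⟨CFC.sqrt c, hs, hm, ?_⟩
    have h : (e * CFC.sqrt c - CFC.sqrt c) * star (e * CFC.sqrt c - CFC.sqrt c) = 0 := by
      have : (e * CFC.sqrt c - CFC.sqrt c) * star (e * CFC.sqrt c - CFC.sqrt c) =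
          (e * (CFC.sqrt c * CFC.sqrt c) - (CFC.sqrt c * CFC.sqrt c)) * star e -
          (e * (CFC.sqrt c * CFC.sqrt c) - (CFC.sqrt c * CFC.sqrt c)) := by
        rw [star_sub, star_mul, hs]; noncomm_ring
      rw [this, hm, he]; simp
    exact sub_eq_zero.1 (CStarRing.mul_star_self_eq_zero_iff _ |>.1 h)
  obtain ⟨d, d1, d2, d3⟩ := hd
  set M := ‖S‖ ^ 2 * (‖c‖ + 1) + 1 with hM
  have hMp : 0 < M := by positivity
  set N := ‖L‖ ^ 2 + ‖L‖ * ‖S‖ + 1 with hN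
  have hNp : 0 < N := by positivity
  set G := 4 * M * (‖q‖ ^ 2 + 1) with hG
  have hGp : 0 < G := by positivity
  obtain ⟨x, y, e1, e2, -, e4⟩ := hpi (min 1 (min (1 / (4 * N)) (η / (G * N)))) (by positivity)
  have bd : ∀ u v w : B, ‖star u * v * w‖ ≤ ‖u‖ * ‖w‖ * ‖v‖ := by
    intro u v w
    calc ‖star u * v * w‖ ≤ ‖star u * v‖ * ‖w‖ := norm_mul_le _ _
      _ ≤ ‖star u‖ * ‖v‖ * ‖w‖ := by gcongr; exact norm_mul_le _ _
      _ = ‖u‖ * ‖w‖ * ‖v‖ := by rw [norm_star]; ring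
  have one : ∀ z : B, ‖star z * c * z - c‖ < min 1 (min (1 / (4 * N)) (η / (G * N))) →
      ∃ g : B, star g = g ∧ star (g * (d * z * S) * q) * (g * (d * z * S) * q) = q * q ∧
      (∀ T, ‖T * g‖ ≤ 2 * ‖T * (d * z * L)‖) ∧ e * g = g ∧ ‖d * z * S‖ ^ 2 ≤ M := by
    intro z hz
    have hz1 : ‖star z * c * z - c‖ ≤ 1 := (hz.trans_le (min_le_left _ _)).le
    have hz2 : ‖star z * c * z - c‖ ≤ 1 / (4 * N) :=
      (hz.trans_le ((min_le_right _ _).trans (min_le_left _ _))).le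
    have ex : ∀ u v : B, star (d * z * u) * (d * z * v) = star u * (star z * c * z) * v := by
      intro u v
      simp only [star_mul, d1, ← d2, mul_assoc]
    obtain ⟨g, g1, g2, g3, g4⟩ := aux_R (d * z * L) (d * z * S) e0 q (by
      have : star (d * z * L) * (d * z * S) - e0 = star L * (star z * c * z - c) * S +
          (star L * c * S - e0) := by
        rw [ex]; noncomm_ring
      rw [this]
      have h1 := bd L (star z * c * z - c) S
      have h2 : ‖L‖ * ‖S‖ * ‖star z * c * z - c‖ ≤ N * (1 / (4 * N)) := by
        gcongr
        rw [hN]; nlinarith [sq_nonneg ‖L‖]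
      have h3 : N * (1 / (4 * N)) = 1 / 4 := by field_simp
      refine (norm_add_le _ _).trans ?_
      linarith) hq h0q
    refine ⟨g, g1, g2, g3, g4 e (by simp only [← mul_assoc, d3]), ?_⟩
    rw [sq, ← CStarRing.norm_star_mul_self, ex]
    refine (bd _ _ _).trans ?_
    have : ‖star z * c * z‖ ≤ ‖c‖ + 1 := by
      have := norm_sub_norm_le (star z * c * z) c
      linarith
    calc ‖S‖ * ‖S‖ * ‖star z * c * z‖ ≤ ‖S‖ * ‖S‖ * (‖c‖ + 1) := by gcongr
      _ ≤ M := by rw [hM]; nlinarith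
  obtain ⟨g, g1, g2, g3, g4, g5⟩ := one x e1
  obtain ⟨k, k1, k2, k3, k4, k5⟩ := one y e2
  refine ⟨g * (d * x * S) * q, k * (d * y * S) * q, ?_, ?_, g2, k2, ?_⟩
  · simp only [← mul_assoc, g4]
  · simp only [← mul_assoc, k4]
  have hLL : ‖star (d * y * L) * (d * x * L)‖ ≤ η / G := by
    have : star (d * y * L) * (d * x * L) = star L * (star y * c * x) * L := by
      simp only [star_mul, d1, ← d2, mul_assoc]
    rw [this]
    refine (bd _ _ _).trans ?_
    have h1 : ‖star y * c * x‖ ≤ η / (G * N) :=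
      (e4.trans_le ((min_le_right _ _).trans (min_le_right _ _))).le
    calc ‖L‖ * ‖L‖ * ‖star y * c * x‖ ≤ N * (η / (G * N)) := by
          gcongr
          rw [hN]; nlinarith [mul_nonneg (norm_nonneg L) (norm_nonneg S)]
      _ = η / G := by field_simp
  have hgk : ‖g * k‖ ≤ 4 * (η / G) := by
    calc ‖g * k‖ ≤ 2 * ‖g * (d * y * L)‖ := k3 g
      _ = 2 * ‖star (d * y * L) * g‖ := by
          rw [← norm_star (g * (d * y * L)), star_mul g, g1]
      _ ≤ 2 * (2 * ‖star (d * y * L) * (d * x * L)‖) := by gcongr; exact g3 _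
      _ ≤ _ := by linarith
  have : star (g * (d * x * S) * q) * (k * (d * y * S) * q) =
      star ((d * x * S) * q) * (g * k) * ((d * y * S) * q) := by
    simp only [star_mul, g1, mul_assoc]
  rw [this]
  refine (bd _ _ _).trans ?_
  have hab : ‖d * x * S‖ * ‖d * y * S‖ ≤ M := by
    nlinarith [sq_nonneg (‖d * x * S‖ - ‖d * y * S‖)]
  calc ‖d * x * S * q‖ * ‖d * y * S * q‖ * ‖g * k‖
      ≤ (‖d * x * S‖ * ‖q‖) * (‖d * y * S‖ * ‖q‖) * (4 * (η / G)) := by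
        gcongr <;> exact norm_mul_le _ _
    _ = (‖d * x * S‖ * ‖d * y * S‖) * ‖q‖ ^ 2 * (4 * (η / G)) := by ring
    _ ≤ M * (‖q‖ ^ 2 + 1) * (4 * (η / G)) := by gcongr; linarith
    _ = η := by rw [hG]; field_simp

/-- The purely algebraic part, with all elements of functional calculus given. -/
lemma aux_main {B : Type*} [NonUnitalCStarAlgebra B] [PartialOrder B] [StarOrderedRing B]
    (c e e0 q1 q2 k : B) (hcne : c ≠ 0)
    (hpair : ∀ η : ℝ, 0 < η → ∃ S T : B, e * S = S ∧ e * T = T ∧ star S * S = q1 * q1 ∧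
      star T * T = q1 * q1 ∧ ‖star S * T‖ ≤ η)
    (se : star e = e) (sq1 : star q1 = q1) (sq2 : star q2 = q2) (sk : star k = k)
    (hec : e * c = c) (h2e : q2 * e = e) (h2k : q2 * k = k) (h12 : q1 * q2 = q2)
    (h01 : e0 * q1 = q1) (hkk : k * k = e - e * e) (hke : k * e = e * k)
    (he0 : e0 ∈ closedIdealGen c) :
    ∃ p : B, p ∈ closedIdealGen c ∧ p * p = p ∧ star p = p ∧ ProperlyInfinite p ∧
      closedIdealGen p = closedIdealGen c := by
  obtain ⟨S, T, eS, eT, SS, TT, hST⟩ := hpair (1 / (2 * (‖e‖ + 1)) ) (by positivity)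
  have kz : ∀ S : B, e * S = S → k * S = 0 := by
    intro S hS
    have : star (k * S) * (k * S) = 0 := by
      calc star (k * S) * (k * S) = star S * ((k * k) * S) := by
            simp only [star_mul, sk, mul_assoc]
        _ = star S * (e * S - e * (e * S)) := by rw [hkk]; noncomm_ring
        _ = 0 := by simp [hS]
    exact (CStarRing.star_mul_self_eq_zero_iff _).1 this
  have kS := kz S eS
  have kT := kz T eT
  have h1e : q1 * e = e := by rw [← h2e, ← mul_assoc, h12]
  have h1k : q1 * k = k := by rw [← h2k, ← mul_assoc, h12]
  have Se : star S * e = star S := by rw [← se, ← star_mul, eS]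
  have Te : star T * e = star T := by rw [← se, ← star_mul, eT]
  have Sk : star S * k = 0 := by rw [← sk, ← star_mul, kS, star_zero]
  have Tk : star T * k = 0 := by rw [← sk, ← star_mul, kT, star_zero]
  have SSe : ∀ z : B, star S * (S * (e * z)) = e * z := by
    intro z
    rw [← mul_assoc, SS, ← mul_assoc, mul_assoc q1, h1e, h1e]
  have SSk : ∀ z : B, star S * (S * (k * z)) = k * z := by
    intro z
    rw [← mul_assoc, SS, ← mul_assoc, mul_assoc q1, h1k, h1k]
  have SSk' : star S * (S * k) = k := by
    rw [← mul_assoc, SS, mul_assoc q1, h1k, h1k]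
  have eS' : ∀ z : B, e * (S * z) = S * z := fun z => by rw [← mul_assoc, eS]
  have kS' : ∀ z : B, k * (S * z) = 0 := fun z => by rw [← mul_assoc, kS, zero_mul]
  have Sk' : ∀ z : B, star S * (k * z) = 0 := fun z => by rw [← mul_assoc, Sk, zero_mul]
  have hkk' : ∀ z : B, k * (k * z) = e * z - e * (e * z) := fun z => by
    rw [← mul_assoc, hkk]; noncomm_ring
  have hke' : ∀ z : B, k * (e * z) = e * (k * z) := fun z => by
    rw [← mul_assoc, hke, mul_assoc]
  obtain ⟨p, hp⟩ : ∃ p : B, p = e - S * (e * star S) - S * k - k * star S := ⟨_, rfl⟩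
  have pp : p * p = p := by
    rw [hp]
    simp only [mul_sub, sub_mul, mul_assoc, eS', Se, SSe, SSk', SSk, kS', Sk', hkk, hkk', hke, hke',
      Sk, mul_zero, sub_zero, zero_sub]
    noncomm_ring
  have ps : star p = p := by
    rw [hp]
    simp only [star_sub, star_mul, star_star, se, sk, mul_assoc]
    abel
  have p1 : q1 * p = p := by
    have q1S : q1 * S = S := by rw [← eS, ← mul_assoc, h1e]
    rw [hp]
    simp only [mul_sub, ← mul_assoc, h1e, q1S, h1k]
  have hpT : star (p * T) * (p * T) - q1 * q1 = - ((star T * S) * e * star (star T * S)) := by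
    have : star (p * T) * (p * T) = star T * (p * T) := by
      rw [star_mul, ps, mul_assoc, ← mul_assoc p, pp]
    rw [this, ← TT, hp]
    simp only [sub_mul, mul_sub, mul_assoc, eT, kT, star_mul, star_star, mul_zero, sub_zero]
    rw [← mul_assoc (star T) k, Tk]
    simp
  have nT : ‖star T * S‖ ≤ 1 / (2 * (‖e‖ + 1)) := by
    rw [← norm_star, star_mul, star_star]; exact hST
  have hsmall : ‖star (p * T) * (p * T) - q1 * q1‖ ≤ 1 / 2 := by
    rw [hpT, norm_neg]
    have hle : 1 / (2 * (‖e‖ + 1)) ≤ 1 := by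
      rw [div_le_one (by positivity)]; linarith [norm_nonneg e]
    calc _ ≤ ‖star T * S * e‖ * ‖star (star T * S)‖ := norm_mul_le _ _
      _ ≤ (‖star T * S‖ * ‖e‖) * ‖star T * S‖ := by
          rw [norm_star]; gcongr; exact norm_mul_le _ _
      _ ≤ (1 / (2 * (‖e‖ + 1)) * (‖e‖ + 1)) * 1 := by
          gcongr
          · linarith
          · linarith
      _ = 1 / 2 := by field_simp
  obtain ⟨g, g1, g2, -, g4⟩ := aux_R (p * T) (p * T) (q1 * q1) q2 hsmall sq2
    (by rw [mul_assoc, h12, h12])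
  obtain ⟨Z, hZ⟩ : ∃ Z : B, Z = g * (p * T) * q2 := ⟨_, rfl⟩
  rw [← hZ] at g2
  have pZ : p * Z = Z := by
    have : p * g = g := g4 p (by rw [← mul_assoc, pp])
    rw [hZ, ← mul_assoc, ← mul_assoc, this]
  have hid := gen_ideal c
  have hidp := gen_ideal p
  have mul_l := fun a x hx => (hid.2.2.2.2 a x hx).1
  have mul_r := fun a x hx => (hid.2.2.2.2 a x hx).2
  have he : e ∈ closedIdealGen c := by
    rw [← h1e, ← h01, mul_assoc]; exact mul_r _ _ he0
  have hk : k ∈ closedIdealGen c := by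
    rw [← h1k, ← h01, mul_assoc]; exact mul_r _ _ he0
  have sub : ∀ x ∈ closedIdealGen c, ∀ y ∈ closedIdealGen c, x - y ∈ closedIdealGen c := by
    intro x hx y hy
    rw [sub_eq_add_neg]
    exact hid.2.2.1 _ hx _ (hid.2.2.2.1 _ hy)
  have hpc : p ∈ closedIdealGen c := by
    rw [hp]
    exact sub _ (sub _ (sub _ he _ (mul_l _ _ (mul_r _ _ he))) _ (mul_l _ _ hk)) _ (mul_r _ _ hk)
  have eZ : e = star Z * (p * (Z * e)) := by
    rw [← mul_assoc p, pZ, ← mul_assoc, g2, mul_assoc, h2e, h2e]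
  have hep : e ∈ closedIdealGen p := by
    rw [eZ]
    exact (hidp.2.2.2.2 _ _ ((hidp.2.2.2.2 _ _ (gen_self p)).2)).1
  have hcp : c ∈ closedIdealGen p := by
    rw [← hec]
    exact (hidp.2.2.2.2 _ _ hep).2
  refine ⟨p, hpc, pp, ps, ⟨?_, ?_, ?_⟩, ?_⟩
  · intro h0
    apply hcne
    rw [← hec, eZ, h0]
    simp
  · have : p = star p * p := by rw [ps, pp]
    rw [this]; exact star_mul_self_nonneg p
  · choose X Y hX hY hXX hYY hXY using fun n : ℕ => hpair (1 / ((n : ℝ) + 1)) (by positivity)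
    have comp : ∀ U V : B, e * V = V →
        star (Z * U * p) * p * (Z * V * p) = p * (star U * V) * p := by
      intro U V hV
      have q2V : q2 * V = V := by rw [← hV, ← mul_assoc, h2e]
      calc star (Z * U * p) * p * (Z * V * p)
          = p * (star U * (star Z * ((p * Z) * (V * p)))) := by
            simp only [star_mul, ps, mul_assoc]
        _ = p * (star U * ((star Z * Z) * (V * p))) := by rw [pZ]; simp only [mul_assoc]
        _ = p * (star U * ((q2 * (q2 * V)) * p)) := by rw [g2]; simp only [mul_assoc]
        _ = _ := by rw [q2V, q2V]; simp only [mul_assoc]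
    have pqp : p * (q1 * q1) * p = p := by
      rw [mul_assoc, mul_assoc, p1, p1, pp]
    refine aux_pi' p ps (fun n => Z * X n * p) (fun n => Z * Y n * p) ?_ ?_ ?_
    · refine tendsto_const_nhds.congr fun n => ?_
      rw [comp _ _ (hX n), hXX, pqp]
    · refine tendsto_const_nhds.congr fun n => ?_
      rw [comp _ _ (hY n), hYY, pqp]
    · have h0 : Tendsto (fun n => star (X n) * Y n) atTop (𝓝 0) :=
        squeeze_zero_norm hXY tendsto_one_div_add_atTop_nhds_zero_nat
      have h1 : Tendsto (fun n => p * (star (X n) * Y n) * p) atTop (𝓝 (p * 0 * p)) :=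
        (tendsto_const_nhds.mul h0).mul tendsto_const_nhds
      rw [mul_zero, zero_mul] at h1
      exact h1.congr fun n => (comp _ _ (hY n)).symm
  · exact Set.Subset.antisymm (gen_le hid hpc) (gen_le hidp hcp)

/-- Continuous ramp: `0` up to `a`, `1` from `2a` on. -/
noncomputable def auxRamp (a t : ℝ) : ℝ := max 0 (min 1 ((t - a) / a))

lemma auxRamp_cont (a : ℝ) : Continuous (auxRamp a) := by
  unfold auxRamp
  fun_prop

lemma auxRamp_of_le {a t : ℝ} (ha : 0 < a) (h : t ≤ a) : auxRamp a t = 0 :=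
  max_eq_left ((min_le_right _ _).trans (div_nonpos_of_nonpos_of_nonneg (by linarith) ha.le))

lemma auxRamp_zero {a : ℝ} (ha : 0 < a) : auxRamp a 0 = 0 := auxRamp_of_le ha ha.le

lemma auxRamp_of_ge {a t : ℝ} (ha : 0 < a) (h : 2 * a ≤ t) : auxRamp a t = 1 := by
  unfold auxRamp
  rw [min_eq_left ((one_le_div ha).2 (by linarith))]
  simp

/-- If `b ≥ 0` and `(b − ε)₊` are properly infinite and generate the same closed
two-sided ideal `I` of `B`, then `I` contains a properly infinite projection which is
full in `I`. -/
theorem exists_full_properly_infinite_projection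
    {B : Type*} [NonUnitalCStarAlgebra B] [PartialOrder B] [StarOrderedRing B]
    (b : B) (hb : 0 ≤ b) (ε : ℝ) (hε : 0 < ε)
    (hbpi : ProperlyInfinite b)
    (hbepi : ProperlyInfinite (cfcₙ (fun t : ℝ => max (t - ε) 0) b))
    (I : Set B) (hIb : closedIdealGen b = I)
    (hIbe : closedIdealGen (cfcₙ (fun t : ℝ => max (t - ε) 0) b) = I) :
    ∃ p : B, p ∈ I ∧ p * p = p ∧ star p = p ∧ ProperlyInfinite p ∧
      closedIdealGen p = I := by
  subst hIbe
  obtain ⟨hcne, hc0, hcpi⟩ := hbepi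
  have hsa : IsSelfAdjoint b := hb.isSelfAdjoint
  have hε2 : 0 < ε / 2 := by positivity
  have hε4 : 0 < ε / 4 := by positivity
  have hε8 : 0 < ε / 8 := by positivity
  have hε16 : 0 < ε / 16 := by positivity
  have rr : ∀ a d : ℝ, 0 < a → 2 * a ≤ d →
      cfcₙ (auxRamp a) b * cfcₙ (auxRamp d) b = cfcₙ (auxRamp d) b := by
    intro a d ha had
    rw [← cfcₙ_mul _ _ b (auxRamp_cont a).continuousOn (auxRamp_zero ha)
      (auxRamp_cont d).continuousOn (auxRamp_zero (by linarith))]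
    congr 1
    funext t
    rcases le_total t d with h | h
    · rw [auxRamp_of_le (by linarith) h, mul_zero]
    · rw [auxRamp_of_ge ha (by linarith), one_mul]
  have sstar : ∀ f : ℝ → ℝ, star (cfcₙ f b) = cfcₙ f b := fun f => (cfcₙ_predicate f b).star_eq
  have fe0 : cfcₙ (auxRamp (ε / 16)) b ∈ closedIdealGen b := by
    have h1 : cfcₙ (auxRamp (ε / 16)) b =
        b * cfcₙ (fun t => auxRamp (ε / 16) t / max t (ε / 16)) b := by
      have hcont : Continuous (fun t => auxRamp (ε / 16) t / max t (ε / 16)) :=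
        (auxRamp_cont _).div (by fun_prop) (fun t => (lt_max_of_lt_right hε16).ne')
      conv_rhs => rw [← cfcₙ_id' ℝ b]
      rw [cfcₙ_id' ℝ b]
      nth_rewrite 2 [← cfcₙ_id' ℝ b]
      rw [← cfcₙ_mul _ _ b continuous_id'.continuousOn rfl hcont.continuousOn
        (by simp [auxRamp_zero hε16])]
      congr 1
      funext t
      rcases le_total t (ε / 16) with h | h
      · rw [auxRamp_of_le hε16 h]; simp
      · rw [max_eq_left h]
        have : t ≠ 0 := by linarith
        field_simp
    rw [h1]
    exact ((gen_ideal b).2.2.2.2 _ _ (gen_self b)).2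
  have hcontk : Continuous (fun t => √(auxRamp (ε / 2) t - auxRamp (ε / 2) t * auxRamp (ε / 2) t)) := by
    have := auxRamp_cont (ε / 2)
    fun_prop
  have zk : (fun t => √(auxRamp (ε / 2) t - auxRamp (ε / 2) t * auxRamp (ε / 2) t)) 0 = 0 := by
    simp [auxRamp_zero hε2]
  have hcpi' := aux_pi _ hc0 hcpi
  have hec : cfcₙ (auxRamp (ε / 2)) b * cfcₙ (fun t : ℝ => max (t - ε) 0) b =
      cfcₙ (fun t : ℝ => max (t - ε) 0) b := by
    rw [← cfcₙ_mul _ _ b (auxRamp_cont _).continuousOn (auxRamp_zero hε2)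
      (Continuous.continuousOn (by fun_prop)) (by simp [hε.le])]
    congr 1
    funext t
    rcases le_total t ε with h | h
    · rw [max_eq_right (by linarith), mul_zero]
    · rw [auxRamp_of_ge hε2 (by linarith), one_mul]
  rw [hIb] at fe0
  refine aux_main _ (cfcₙ (auxRamp (ε / 2)) b) (cfcₙ (auxRamp (ε / 16)) b)
    (cfcₙ (auxRamp (ε / 8)) b) (cfcₙ (auxRamp (ε / 4)) b)
    (cfcₙ (fun t => √(auxRamp (ε / 2) t - auxRamp (ε / 2) t * auxRamp (ε / 2) t)) b) hcne
    (aux_pair _ _ (cfcₙ (auxRamp (ε / 16)) b) _ hc0 hcpi' hec fe0 (sstar _)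
      (rr _ _ hε16 (by linarith)))
    (sstar _) (sstar _) (sstar _) (sstar _) hec (rr _ _ hε4 (by linarith)) ?_
    (rr _ _ hε8 (by linarith)) (rr _ _ hε16 (by linarith)) ?_ ?_ fe0
  · rw [← cfcₙ_mul _ _ b (auxRamp_cont _).continuousOn (auxRamp_zero hε4)
      hcontk.continuousOn zk]
    congr 1
    funext t
    rcases le_total t (ε / 2) with h | h
    · rw [auxRamp_of_le hε2 h]; simp
    · rw [auxRamp_of_ge hε4 (by linarith), one_mul]
  · rw [← cfcₙ_mul _ _ b hcontk.continuousOn zk hcontk.continuousOn zk,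
      ← cfcₙ_mul _ _ b (auxRamp_cont _).continuousOn (auxRamp_zero hε2)
        (auxRamp_cont _).continuousOn (auxRamp_zero hε2),
      ← cfcₙ_sub (auxRamp (ε / 2))
        (fun x => auxRamp (ε / 2) x * auxRamp (ε / 2) x) b (auxRamp_cont _).continuousOn (auxRamp_zero hε2)
        ((auxRamp_cont _).mul (auxRamp_cont _)).continuousOn (by simp [auxRamp_zero hε2])]
    congr 1
    funext t
    have h0 : 0 ≤ auxRamp (ε / 2) t := le_max_left _ _
    have h1 : auxRamp (ε / 2) t ≤ 1 := max_le zero_le_one (min_le_left _ _)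
    exact Real.mul_self_sqrt (by nlinarith)
  · exact cfcₙ_commute_cfcₙ _ _ b
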